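/- arXiv:1106.2213 — 2 statements merged into one kernel-verified Lean document; each statement's English description precedes it below -/
import Mathlib

section
/- Let f be a doubly concave function on [0,∞), let A, B be n×n positive semidefinite complex matrices, and let p ∈ (0,1]. Then there exists a unitary V ∈ M_n(ℂ) such that f(A β_p B) ≥ V (f(A) β_p f(B)) V* in the positive semidefinite (Loewner) order. -/
open scoped ComplexOrder

section Defs

variable {n : ℕ}

/-- eigenvalues of a Hermitian matrix listed in increasing order -/
noncomputable def eigUp {A : Matrix (Fin n) (Fin n) ℂ} (hA : A.IsHermitian) : Fin n → ℝ :=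
  fun i => hA.eigenvalues (Tuple.sort hA.eigenvalues i)

/-- eigenvalues of a Hermitian matrix listed in decreasing order: `eigDown hA i = μ_{i+1}(A)` -/
noncomputable def eigDown {A : Matrix (Fin n) (Fin n) ℂ} (hA : A.IsHermitian) : Fin n → ℝ :=
  fun i => eigUp hA i.rev

/-- the product of the `k` smallest eigenvalues, `∏_{j=1}^k μ_{n+1-j}(A)` -/
noncomputable def prodSmall (A : Matrix (Fin n) (Fin n) ℂ) (k : ℕ) : ℝ :=
  if hA : A.IsHermitian then
    ∏ i ∈ Finset.univ.filter (fun i : Fin n => (i : ℕ) < k), eigUp hA i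
  else 0

/-- the product of the `k` largest eigenvalues, `∏_{j=1}^k μ_j(A)` -/
noncomputable def prodLarge (A : Matrix (Fin n) (Fin n) ℂ) (k : ℕ) : ℝ :=
  if hA : A.IsHermitian then
    ∏ i ∈ Finset.univ.filter (fun i : Fin n => (i : ℕ) < k), eigDown hA i
  else 0

/-- the sum of the `k` smallest eigenvalues, `∑_{j=1}^k μ_{n+1-j}(A)` -/
noncomputable def sumSmall (A : Matrix (Fin n) (Fin n) ℂ) (k : ℕ) : ℝ :=
  if hA : A.IsHermitian then
    ∑ i ∈ Finset.univ.filter (fun i : Fin n => (i : ℕ) < k), eigUp hA i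
  else 0

/-- A doubly concave function on an interval `Ω ⊆ [0,∞)`. -/
structure DoublyConcaveOn (f : ℝ → ℝ) (Ω : Set ℝ) : Prop where
  subset_Ici : Ω ⊆ Set.Ici (0 : ℝ)
  nonneg : ∀ x ∈ Ω, 0 ≤ f x
  continuousOn : ContinuousOn f Ω
  concaveOn : ConcaveOn ℝ Ω f
  geomConcave : ∀ x ∈ Ω, ∀ y ∈ Ω, Real.sqrt (f x * f y) ≤ f (Real.sqrt (x * y))

/-- `𝔼_p(Z) := (𝔼(Z^p))^{1/p}` -/
noncomputable def Ep {n m : ℕ} (E : Matrix (Fin n) (Fin n) ℂ →ₗ[ℂ] Matrix (Fin m) (Fin m) ℂ)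
    (p : ℝ) (Z : Matrix (Fin n) (Fin n) ℂ) : Matrix (Fin m) (Fin m) ℂ :=
  cfc (fun x : ℝ => x ^ (1 / p)) (E (cfc (fun x : ℝ => x ^ p) Z))

/-- the power `p`-mean `A β_p B := ((A^p + B^p)/2)^{1/p}` -/
noncomputable def betaP (p : ℝ) (A B : Matrix (Fin n) (Fin n) ℂ) : Matrix (Fin n) (Fin n) ℂ :=
  cfc (fun x : ℝ => x ^ (1 / p))
    ((2 : ℂ)⁻¹ • (cfc (fun x : ℝ => x ^ p) A + cfc (fun x : ℝ => x ^ p) B))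

noncomputable def sqrtM (A : Matrix (Fin n) (Fin n) ℂ) : Matrix (Fin n) (Fin n) ℂ :=
  cfc Real.sqrt A

noncomputable def invSqrtM (A : Matrix (Fin n) (Fin n) ℂ) : Matrix (Fin n) (Fin n) ℂ :=
  cfc (fun x : ℝ => (Real.sqrt x)⁻¹) A

/-- operator mean with representing function `h`: `A σ B = A^{1/2} h(A^{-1/2} B A^{-1/2}) A^{1/2}` -/
noncomputable def opMean (h : ℝ → ℝ) (A B : Matrix (Fin n) (Fin n) ℂ) :
    Matrix (Fin n) (Fin n) ℂ :=
  sqrtM A * cfc h (invSqrtM A * B * invSqrtM A) * sqrtM A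

/-- the weighted geometric mean `A #_α B` -/
noncomputable def sharp (α : ℝ) (A B : Matrix (Fin n) (Fin n) ℂ) : Matrix (Fin n) (Fin n) ℂ :=
  sqrtM A * cfc (fun x : ℝ => x ^ α) (invSqrtM A * B * invSqrtM A) * sqrtM A

/-- the (real) determinant of a Hermitian matrix -/
noncomputable def rdet (A : Matrix (Fin n) (Fin n) ℂ) : ℝ := (A.det).re

open Classical in
/-- the derived anti-norm `‖A‖_! = ‖A^{-p}‖^{-1/p}` for invertible positive `A`, `0` otherwise. -/
noncomputable def derivedAntiNorm (N : Matrix (Fin n) (Fin n) ℂ → ℝ) (p : ℝ)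
    (A : Matrix (Fin n) (Fin n) ℂ) : ℝ :=
  if IsUnit A.det then (N (cfc (fun x : ℝ => x ^ (-p)) A)) ^ (-(1 / p)) else 0

end Defs

/-!
In logarithmic coordinates a geometrically concave `f` is concave, and ordinary concavity together
with nonnegativity confines its slopes there to `[0, 1]`. Hence for each `z > 0` the graph of `f`
lies below that of a power `f z * (t / z) ^ c` with `c ∈ [0, 1]`, touching it at `z`. After the
substitution `f (t ^ (1 / p)) ^ p` the comparison function is a multiple of `t ^ c` with the same
`c`, so `g t = f (t ^ (1 / p)) ^ p` is again increasing and concave on `[0, ∞)`.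

In terms of `X = A ^ p` and `Y = B ^ p` the claim compares `g ((X + Y) / 2)` with
`(g X + g Y) / 2`. For each `i` a dimension count gives a unit vector at which the quadratic form of
`(X + Y) / 2` is at most its `i`-th eigenvalue while that of `(g X + g Y) / 2` is at least its
`i`-th eigenvalue. Jensen's inequality at this vector compares the eigenvalues one by one, and `V`
carries one eigenbasis to the other.
-/

section

open Set

theorem convex_of_isClosed_of_midpoint_mem {E : Type*} [AddCommGroup E] [Module ℝ E]
    [TopologicalSpace E] [IsTopologicalAddGroup E] [ContinuousSMul ℝ E] {s : Set E}
    (hs : IsClosed s) (hmid : ∀ x ∈ s, ∀ y ∈ s, midpoint ℝ x y ∈ s) : Convex ℝ s := by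
  refine convex_iff_segment_subset.2 fun x hx y hy => ?_
  rw [segment_eq_image_lineMap]
  rintro _ ⟨t, ht, rfl⟩
  by_contra hts
  set T : Set ℝ := AffineMap.lineMap x y ⁻¹' s
  have hT : IsClosed T := hs.preimage AffineMap.lineMap_continuous
  -- `(a, b)` is the component of `t` in the complement of `T`, yet `T` contains its midpoint.
  obtain ⟨a, ⟨haT, ha⟩, ha_max⟩ := (isCompact_Icc.inter_left hT).exists_isGreatest
    (s := T ∩ Icc 0 t) ⟨0, by simpa [T] using hx, left_mem_Icc.2 ht.1⟩
  obtain ⟨b, ⟨hbT, hb⟩, hb_min⟩ := (isCompact_Icc.inter_left hT).exists_isLeast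
    (s := T ∩ Icc t 1) ⟨1, by simpa [T] using hy, right_mem_Icc.2 ht.2⟩
  have hat : a < t := ha.2.lt_of_ne (by rintro rfl; exact hts haT)
  have htb : t < b := hb.1.lt_of_ne (by rintro rfl; exact hts hbT)
  have hm : midpoint ℝ a b ∈ T := by
    simpa only [T, mem_preimage, AffineMap.map_midpoint] using hmid _ haT _ hbT
  have hmab : midpoint ℝ a b = (a + b) / 2 := by
    rw [midpoint_eq_smul_add, invOf_eq_inv, smul_eq_mul, inv_mul_eq_div]
  rw [hmab] at hm
  rcases le_total ((a + b) / 2) t with hle | hle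
  · linarith [ha_max ⟨hm, by linarith [ha.1], hle⟩]
  · linarith [hb_min ⟨hm, hle, by linarith [hb.2]⟩]

theorem concaveOn_univ_of_continuous_of_midpoint_le {E : Type*} [AddCommGroup E] [Module ℝ E]
    [TopologicalSpace E] [IsTopologicalAddGroup E] [ContinuousSMul ℝ E] {φ : E → ℝ}
    (hφ : Continuous φ) (hmid : ∀ x y, midpoint ℝ (φ x) (φ y) ≤ φ (midpoint ℝ x y)) :
    ConcaveOn ℝ univ φ := by
  refine concaveOn_of_convex_hypograph (convex_of_isClosed_of_midpoint_mem ?_ ?_)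
  · simp only [mem_univ, true_and]
    exact isClosed_le continuous_snd (hφ.comp continuous_fst)
  · rintro ⟨x, r⟩ ⟨-, hr⟩ ⟨y, q⟩ ⟨-, hq⟩
    refine ⟨mem_univ _, le_trans ?_ (hmid x y)⟩
    simp only [midpoint_eq_smul_add, invOf_eq_inv, smul_eq_mul, Prod.mk_add_mk,
      Prod.smul_mk] at hr hq ⊢
    linarith

theorem concaveOn_of_forall_exists_concaveOn_ge {s : Set ℝ} {g : ℝ → ℝ} (hs : Convex ℝ s)
    (h : ∀ z ∈ interior s, ∃ φ, ConcaveOn ℝ s φ ∧ (∀ x ∈ s, g x ≤ φ x) ∧ φ z ≤ g z) :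
    ConcaveOn ℝ s g := by
  refine LinearOrder.concaveOn_of_lt hs fun x hx y hy hxy a b ha hb hab => ?_
  have hz : a • x + b • y ∈ interior s := by
    have hsub : Ioo x y ⊆ interior s :=
      isOpen_Ioo.subset_interior_iff.2 (Ioo_subset_Icc_self.trans (hs.ordConnected.out hx hy))
    refine hsub ?_
    rw [← openSegment_eq_Ioo hxy]
    exact ⟨a, b, ha, hb, hab, rfl⟩
  obtain ⟨φ, hφ, hgφ, hφz⟩ := h _ hz
  calc a • g x + b • g y ≤ a • φ x + b • φ y := by gcongr <;> apply hgφ <;> assumption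
    _ ≤ φ (a • x + b • y) := hφ.2 hx hy ha.le hb.le hab
    _ ≤ g (a • x + b • y) := hφz

theorem exists_le_add_mul_of_concaveOn {s : Set ℝ} {φ : ℝ → ℝ} (hφ : ConcaveOn ℝ s φ) {z : ℝ}
    (hz : z ∈ interior s) : ∃ c, ∀ t ∈ s, φ t ≤ φ z + c * (t - z) := by
  refine ⟨-derivWithin (-φ) (Ioi z) z, fun t ht => ?_⟩
  rcases lt_trichotomy t z with htz | rfl | hzt
  · have h := (hφ.neg.slope_le_leftDeriv_of_mem_interior ht hz htz).trans
      (hφ.neg.leftDeriv_le_rightDeriv_of_mem_interior hz)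
    rw [slope_def_field, div_le_iff₀ (sub_pos.2 htz)] at h
    simp only [Pi.neg_apply] at h
    linarith
  · simp
  · have h := hφ.neg.rightDeriv_le_slope_of_mem_interior hz ht hzt
    rw [slope_def_field, le_div_iff₀ (sub_pos.2 hzt)] at h
    simp only [Pi.neg_apply] at h
    linarith

theorem monotoneOn_Ici_of_concaveOn_of_nonneg {a : ℝ} {f : ℝ → ℝ} (hf : ConcaveOn ℝ (Ici a) f)
    (hf0 : ∀ x ∈ Ici a, 0 ≤ f x) : MonotoneOn f (Ici a) := by
  intro x hx y hy hxy
  rcases hxy.eq_or_lt with rfl | hxy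
  · rfl
  obtain ⟨c, hc⟩ := exists_le_add_mul_of_concaveOn hf (z := y)
    (by rw [interior_Ici]; exact hx.trans_lt hxy)
  have hc0 : 0 ≤ c := by
    by_contra! hneg
    have hw : 0 ≤ -(f y + 1) / c := div_nonneg_of_nonpos (by linarith [hf0 y hy]) hneg.le
    have hmem : y + -(f y + 1) / c ∈ Ici a := le_add_of_le_of_nonneg hy hw
    have hle := hc _ hmem
    rw [add_sub_cancel_left, mul_div_cancel₀ _ hneg.ne] at hle
    linarith [hf0 _ hmem]
  nlinarith [hc x hx]

theorem smul_le_map_smul_of_concaveOn {E : Type*} [AddCommGroup E] [Module ℝ E] {s : Set E}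
    {f : E → ℝ} (hf : ConcaveOn ℝ s f) (h0 : 0 ∈ s) (hf0 : 0 ≤ f 0) {x : E} (hx : x ∈ s) {a : ℝ}
    (ha0 : 0 ≤ a) (ha1 : a ≤ 1) : a • f x ≤ f (a • x) := by
  have h := hf.2 h0 hx (sub_nonneg.2 ha1) ha0 (sub_add_cancel 1 a)
  rw [smul_zero, zero_add] at h
  exact (le_add_of_nonneg_left (smul_nonneg (sub_nonneg.2 ha1) hf0)).trans h

theorem eqOn_zero_of_concaveOn_Ici {f : ℝ → ℝ} (hf : ConcaveOn ℝ (Ici 0) f)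
    (hf0 : ∀ x ∈ Ici 0, 0 ≤ f x) {z : ℝ} (hz : 0 < z) (hfz : f z = 0) : EqOn f 0 (Ici 0) := by
  intro t ht
  refine le_antisymm ?_ (hf0 t ht)
  rcases le_total t z with htz | hzt
  · exact (monotoneOn_Ici_of_concaveOn_of_nonneg hf hf0 ht hz.le htz).trans_eq hfz
  · have ht0 : 0 < t := hz.trans_le hzt
    have h := smul_le_map_smul_of_concaveOn hf self_mem_Ici (hf0 0 self_mem_Ici) ht
      (div_nonneg hz.le ht) ((div_le_one ht0).2 hzt)
    rw [smul_eq_mul, smul_eq_mul, div_mul_cancel₀ _ ht0.ne', hfz] at h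
    exact nonpos_of_mul_nonpos_right h (div_pos hz ht0)

namespace DoublyConcaveOn

variable {f : ℝ → ℝ}

theorem concaveOn_log_comp_exp (hf : DoublyConcaveOn f (Ici 0)) (hpos : ∀ x, 0 < x → 0 < f x) :
    ConcaveOn ℝ univ fun s => Real.log (f (Real.exp s)) := by
  have hfe (s : ℝ) : 0 < f (Real.exp s) := hpos _ (Real.exp_pos s)
  refine concaveOn_univ_of_continuous_of_midpoint_le ?_ fun x y => ?_
  · refine Continuous.log ?_ fun s => (hfe s).ne'
    exact hf.continuousOn.comp_continuous Real.continuous_exp fun s => (Real.exp_pos s).le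
  · have h := Real.log_le_log (Real.sqrt_pos.2 (mul_pos (hfe x) (hfe y)))
      (hf.geomConcave _ (Real.exp_pos x).le _ (Real.exp_pos y).le)
    rw [Real.log_sqrt (mul_pos (hfe x) (hfe y)).le, Real.log_mul (hfe x).ne' (hfe y).ne',
      ← Real.exp_add, ← Real.exp_half] at h
    simpa only [midpoint_eq_smul_add, invOf_eq_inv, smul_eq_mul, inv_mul_eq_div] using h

theorem exists_log_le_add_mul (hf : DoublyConcaveOn f (Ici 0)) (hpos : ∀ x, 0 < x → 0 < f x)
    (s₀ : ℝ) : ∃ c ∈ Icc (0 : ℝ) 1, ∀ s,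
      Real.log (f (Real.exp s)) ≤ Real.log (f (Real.exp s₀)) + c * (s - s₀) := by
  obtain ⟨c, hc⟩ := exists_le_add_mul_of_concaveOn (hf.concaveOn_log_comp_exp hpos) (z := s₀)
    (by rw [interior_univ]; exact mem_univ s₀)
  have hfe (s : ℝ) : 0 < f (Real.exp s) := hpos _ (Real.exp_pos s)
  refine ⟨c, ⟨?_, ?_⟩, fun s => hc s (mem_univ s)⟩
  · have hmono : Real.log (f (Real.exp s₀)) ≤ Real.log (f (Real.exp (s₀ + 1))) :=
      Real.log_le_log (hfe s₀) (monotoneOn_Ici_of_concaveOn_of_nonneg hf.concaveOn hf.nonneg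
        (Real.exp_pos _).le (Real.exp_pos _).le (Real.exp_le_exp.2 (by linarith)))
    linarith [hc (s₀ + 1) (mem_univ _)]
  · have hscale := smul_le_map_smul_of_concaveOn hf.concaveOn self_mem_Ici
      (hf.nonneg 0 self_mem_Ici) (Real.exp_pos s₀).le (Real.exp_pos (-1)).le
      (Real.exp_le_one_iff.2 (by norm_num))
    rw [smul_eq_mul, smul_eq_mul, ← Real.exp_add] at hscale
    have hlog := Real.log_le_log (mul_pos (Real.exp_pos _) (hfe s₀)) hscale
    rw [Real.log_mul (Real.exp_ne_zero _) (hfe s₀).ne', Real.log_exp] at hlog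
    linarith [hc (-1 + s₀) (mem_univ _)]

theorem exists_le_mul_rpow (hf : DoublyConcaveOn f (Ici 0)) {z : ℝ} (hz : 0 < z) :
    ∃ c ∈ Icc (0 : ℝ) 1, ∀ t ∈ Ici 0, f t ≤ f z * (t / z) ^ c := by
  by_cases hzero : ∃ x, 0 < x ∧ f x = 0
  · obtain ⟨x, hx, hfx⟩ := hzero
    have hf0 := eqOn_zero_of_concaveOn_Ici hf.concaveOn hf.nonneg hx hfx
    exact ⟨0, by simp, fun t ht => by simp [hf0 ht, hf0 hz.le]⟩
  push Not at hzero
  have hpos (x : ℝ) (hx : 0 < x) : 0 < f x := (hf.nonneg x hx.le).lt_of_ne (hzero x hx).symm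
  obtain ⟨c, hc, hle⟩ := hf.exists_log_le_add_mul hpos (Real.log z)
  have hle_pos (t : ℝ) (ht : 0 < t) : f t ≤ f z * (t / z) ^ c := by
    have htz : 0 < (t / z) ^ c := Real.rpow_pos_of_pos (div_pos ht hz) c
    rw [← Real.log_le_log_iff (hpos t ht) (mul_pos (hpos z hz) htz),
      Real.log_mul (hpos z hz).ne' htz.ne', Real.log_rpow (div_pos ht hz),
      Real.log_div ht.ne' hz.ne']
    simpa only [Real.exp_log ht, Real.exp_log hz] using hle (Real.log t)
  refine ⟨c, hc, fun t ht => ?_⟩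
  rw [← closure_Ioi] at ht
  refine le_on_closure (s := Ioi 0) hle_pos ?_ ?_ ht
  · simpa only [closure_Ioi] using hf.continuousOn
  · have hcont : Continuous fun t : ℝ => f z * (t / z) ^ c :=
      continuous_const.mul ((Real.continuous_rpow_const hc.1).comp (continuous_id.div_const z))
    exact hcont.continuousOn

theorem concaveOn_rpow_comp_rpow (hf : DoublyConcaveOn f (Ici 0)) {p : ℝ} (hp : 0 < p) :
    ConcaveOn ℝ (Ici 0) fun t => f (t ^ (1 / p)) ^ p := by
  refine concaveOn_of_forall_exists_concaveOn_ge (convex_Ici 0) fun z hz => ?_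
  rw [interior_Ici, mem_Ioi] at hz
  obtain ⟨c, hc, hle⟩ := hf.exists_le_mul_rpow (Real.rpow_pos_of_pos hz (1 / p))
  have hfz : 0 ≤ f (z ^ (1 / p)) := hf.nonneg _ (Real.rpow_nonneg hz.le _)
  refine ⟨fun t => (f (z ^ (1 / p)) ^ p / z ^ c) • t ^ c, ?_, fun t ht => ?_, ?_⟩
  · exact (Real.concaveOn_rpow hc.1 hc.2).smul
      (div_nonneg (Real.rpow_nonneg hfz p) (Real.rpow_nonneg hz.le c))
  · have ht' : 0 ≤ t ^ (1 / p) := Real.rpow_nonneg ht _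
    have htz : 0 ≤ t / z := div_nonneg ht hz.le
    calc f (t ^ (1 / p)) ^ p
        ≤ (f (z ^ (1 / p)) * (t ^ (1 / p) / z ^ (1 / p)) ^ c) ^ p :=
          Real.rpow_le_rpow (hf.nonneg _ ht') (hle _ ht') hp.le
      _ = f (z ^ (1 / p)) ^ p * (t / z) ^ c := by
          rw [← Real.div_rpow ht hz.le, ← Real.rpow_mul htz,
            Real.mul_rpow hfz (Real.rpow_nonneg htz _), ← Real.rpow_mul htz]
          congr 2
          field_simp
      _ = (f (z ^ (1 / p)) ^ p / z ^ c) • t ^ c := by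
          rw [Real.div_rpow ht hz.le, smul_eq_mul, mul_div_assoc', div_mul_eq_mul_div]
  · exact (div_mul_cancel₀ _ (Real.rpow_pos_of_pos hz c).ne').le

end DoublyConcaveOn

end

section QuadraticForm

open Matrix
open Set hiding diagonal

variable {𝕜 ι κ : Type*} [RCLike 𝕜] [Fintype ι]

theorem re_dotProduct_sum_smul_mulVec [Fintype κ] (w : κ → ℝ) (X : κ → Matrix ι ι 𝕜) (v : ι → 𝕜) :
    RCLike.re (star v ⬝ᵥ ((∑ k, w k • X k) *ᵥ v)) =
      ∑ k, w k • RCLike.re (star v ⬝ᵥ (X k *ᵥ v)) := by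
  simp only [sum_mulVec, smul_mulVec, dotProduct_sum, dotProduct_smul, map_sum, RCLike.smul_re,
    smul_eq_mul]

theorem exists_unit_map_eq_zero_of_card_lt [Fintype κ] (L : (ι → 𝕜) →ₗ[𝕜] (κ → 𝕜))
    (hcard : Fintype.card κ < Fintype.card ι) :
    ∃ v, RCLike.re (star v ⬝ᵥ v) = 1 ∧ L v = 0 := by
  have hker : LinearMap.ker L ≠ ⊥ := LinearMap.ker_ne_bot_of_finrank_lt <| by
    rwa [Module.finrank_fintype_fun_eq_card, Module.finrank_fintype_fun_eq_card]
  obtain ⟨u, hu, hu0⟩ := (Submodule.ne_bot_iff _).1 hker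
  set r := RCLike.re (star u ⬝ᵥ u)
  have hr : 0 < r := (RCLike.pos_iff.1 (dotProduct_star_self_pos_iff.2 hu0)).1
  refine ⟨(√r)⁻¹ • u, ?_, ?_⟩
  · rw [star_smul, smul_dotProduct, dotProduct_smul, smul_smul, RCLike.smul_re, star_trivial,
      ← mul_inv, Real.mul_self_sqrt hr.le, inv_mul_cancel₀ hr.ne']
  · rw [LinearMap.map_smul_of_tower, LinearMap.mem_ker.1 hu, smul_zero]

variable [DecidableEq ι] {A B : Matrix ι ι 𝕜}

theorem monovary_eigenvalues (hA : A.IsHermitian) (hB : B.IsHermitian) :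
    Monovary hA.eigenvalues hB.eigenvalues := by
  intro i j hij
  exact hA.eigenvalues₀_antitone (hB.eigenvalues₀_antitone.reflect_lt hij).le

/-- The squared moduli of the coordinates of `v` in the chosen eigenvector basis of a Hermitian
matrix. For a unit vector they are the weights with which the quadratic form of the matrix at `v`
averages the eigenvalues. -/
noncomputable def spectralWeight (hA : A.IsHermitian) (v : ι → 𝕜) (k : ι) : ℝ :=
  ‖(star (hA.eigenvectorUnitary : Matrix ι ι 𝕜) *ᵥ v) k‖ ^ 2

theorem spectralWeight_nonneg (hA : A.IsHermitian) (v : ι → 𝕜) (k : ι) :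
    0 ≤ spectralWeight hA v k :=
  sq_nonneg _

theorem cfc_eq_mul_diagonal_mul (hA : A.IsHermitian) (φ : ℝ → ℝ) :
    cfc φ A = (hA.eigenvectorUnitary : Matrix ι ι 𝕜) *
      diagonal (RCLike.ofReal ∘ φ ∘ hA.eigenvalues) *
        star (hA.eigenvectorUnitary : Matrix ι ι 𝕜) := by
  rw [hA.cfc_eq, IsHermitian.cfc, Unitary.conjStarAlgAut_apply]

theorem re_dotProduct_cfc_mulVec (hA : A.IsHermitian) (φ : ℝ → ℝ) (v : ι → 𝕜) :
    RCLike.re (star v ⬝ᵥ (cfc φ A *ᵥ v)) =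
      ∑ k, spectralWeight hA v k * φ (hA.eigenvalues k) := by
  set U : Matrix ι ι 𝕜 := ↑hA.eigenvectorUnitary
  have hstar : star v ᵥ* U = star (star U *ᵥ v) := by
    rw [star_mulVec, star_eq_conjTranspose, conjTranspose_conjTranspose]
  rw [cfc_eq_mul_diagonal_mul hA, ← mulVec_mulVec, ← mulVec_mulVec, dotProduct_mulVec, hstar,
    dotProduct, map_sum]
  refine Finset.sum_congr rfl fun k _ => ?_
  rw [mulVec_diagonal, Pi.star_apply, RCLike.star_def, mul_left_comm, RCLike.conj_mul,
    ← RCLike.ofReal_pow, Function.comp_apply, ← RCLike.ofReal_mul, RCLike.ofReal_re, mul_comm]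
  rfl

theorem re_dotProduct_mulVec (hA : A.IsHermitian) (v : ι → 𝕜) :
    RCLike.re (star v ⬝ᵥ (A *ᵥ v)) = ∑ k, spectralWeight hA v k * hA.eigenvalues k := by
  simpa only [cfc_id' ℝ A hA.isSelfAdjoint] using re_dotProduct_cfc_mulVec hA (fun x => x) v

theorem sum_spectralWeight (hA : A.IsHermitian) (v : ι → 𝕜) :
    ∑ k, spectralWeight hA v k = RCLike.re (star v ⬝ᵥ v) := by
  have h := re_dotProduct_cfc_mulVec hA (fun _ => 1) v
  rw [cfc_const_one ℝ A hA.isSelfAdjoint, one_mulVec] at h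
  simpa only [mul_one] using h.symm

theorem re_dotProduct_mulVec_mem (hA : A.IsHermitian) {s : Set ℝ} (hs : Convex ℝ s) {v : ι → 𝕜}
    (hv : RCLike.re (star v ⬝ᵥ v) = 1)
    (h : ∀ k, spectralWeight hA v k ≠ 0 → hA.eigenvalues k ∈ s) :
    RCLike.re (star v ⬝ᵥ (A *ᵥ v)) ∈ s := by
  rw [re_dotProduct_mulVec hA, ← finsum_eq_sum_of_fintype]
  refine hs.finsum_mem (spectralWeight_nonneg hA v) ?_ h
  rw [finsum_eq_sum_of_fintype, sum_spectralWeight, hv]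

theorem re_dotProduct_cfc_mulVec_le_of_concaveOn (hA : A.IsHermitian) {s : Set ℝ} {g : ℝ → ℝ}
    (hg : ConcaveOn ℝ s g) (hAs : ∀ k, hA.eigenvalues k ∈ s) {v : ι → 𝕜}
    (hv : RCLike.re (star v ⬝ᵥ v) = 1) :
    RCLike.re (star v ⬝ᵥ (cfc g A *ᵥ v)) ≤ g (RCLike.re (star v ⬝ᵥ (A *ᵥ v))) := by
  rw [re_dotProduct_cfc_mulVec hA, re_dotProduct_mulVec hA]
  exact hg.le_map_sum (fun k _ => spectralWeight_nonneg hA v k)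
    ((sum_spectralWeight hA v).trans hv) fun k _ => hAs k

theorem exists_unit_between_eigenvalues (hA : A.IsHermitian) (hB : B.IsHermitian) (i : ι) :
    ∃ v : ι → 𝕜, RCLike.re (star v ⬝ᵥ v) = 1 ∧
      RCLike.re (star v ⬝ᵥ (A *ᵥ v)) ≤ hA.eigenvalues i ∧
      hB.eigenvalues i ≤ RCLike.re (star v ⬝ᵥ (B *ᵥ v)) := by
  -- Kill the coordinates of `v` along the eigenvectors of `A` above level `i` and along those of
  -- `B` below level `i`: these are at most `card ι - 1` linear conditions.
  let L : (ι → 𝕜) →ₗ[𝕜] ({k // k ≠ i} → 𝕜) := LinearMap.pi fun k =>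
    LinearMap.proj k.1 ∘ₗ mulVecLin (star (if hA.eigenvalues i < hA.eigenvalues k
      then hA.eigenvectorUnitary else hB.eigenvectorUnitary : Matrix ι ι 𝕜))
  obtain ⟨v, hv, hLv⟩ := exists_unit_map_eq_zero_of_card_lt L
    (Fintype.card_subtype_lt (x := i) (by simp only [ne_eq, not_true_eq_false, not_false_eq_true]))
  have hL (k : ι) (hk : k ≠ i) : (star (if hA.eigenvalues i < hA.eigenvalues k
      then hA.eigenvectorUnitary else hB.eigenvectorUnitary : Matrix ι ι 𝕜) *ᵥ v) k = 0 :=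
    congrFun hLv ⟨k, hk⟩
  refine ⟨v, hv, re_dotProduct_mulVec_mem hA (convex_Iic _) hv fun k => ?_,
    re_dotProduct_mulVec_mem hB (convex_Ici _) hv fun k => ?_⟩
  · contrapose!
    intro hk
    rw [mem_Iic, not_le] at hk
    have h0 := hL k (by rintro rfl; exact hk.false)
    rw [if_pos hk] at h0
    rw [spectralWeight, h0, norm_zero, zero_pow two_ne_zero]
  · contrapose!
    intro hk
    rw [mem_Ici, not_le] at hk
    have h0 := hL k (by rintro rfl; exact hk.false)
    rw [if_neg (monovary_eigenvalues hA hB hk).not_gt] at h0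
    rw [spectralWeight, h0, norm_zero, zero_pow two_ne_zero]

theorem eigenvalues_mem_of_forall_re_dotProduct_mulVec_mem (hA : A.IsHermitian) {s : Set ℝ}
    (h : ∀ v : ι → 𝕜, RCLike.re (star v ⬝ᵥ v) = 1 → RCLike.re (star v ⬝ᵥ (A *ᵥ v)) ∈ s) (i : ι) :
    hA.eigenvalues i ∈ s := by
  rw [hA.eigenvalues_eq]
  refine h _ ?_
  rw [dotProduct_comm, ← EuclideanSpace.inner_eq_star_dotProduct, inner_self_eq_norm_sq,
    hA.eigenvectorBasis.norm_eq_one, one_pow]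

theorem eigenvalues_sum_smul_cfc_le [Fintype κ] {s : Set ℝ} {g : ℝ → ℝ} (hg : ConcaveOn ℝ s g)
    (hmono : MonotoneOn g s) {w : κ → ℝ} (hw : ∀ k, 0 ≤ w k) (hw1 : ∑ k, w k = 1)
    {X : κ → Matrix ι ι 𝕜} (hX : ∀ k, (X k).IsHermitian) (hXs : ∀ k i, (hX k).eigenvalues i ∈ s)
    (hM : (∑ k, w k • X k).IsHermitian) (hG : (∑ k, w k • cfc g (X k)).IsHermitian) (i : ι) :
    hG.eigenvalues i ≤ g (hM.eigenvalues i) := by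
  have hmem (v : ι → 𝕜) (hv : RCLike.re (star v ⬝ᵥ v) = 1) (k : κ) :
      RCLike.re (star v ⬝ᵥ (X k *ᵥ v)) ∈ s :=
    re_dotProduct_mulVec_mem (hX k) hg.1 hv fun j _ => hXs k j
  have hMmem (v : ι → 𝕜) (hv : RCLike.re (star v ⬝ᵥ v) = 1) :
      RCLike.re (star v ⬝ᵥ ((∑ k, w k • X k) *ᵥ v)) ∈ s := by
    rw [re_dotProduct_sum_smul_mulVec]
    exact hg.1.sum_mem (fun k _ => hw k) hw1 fun k _ => hmem v hv k
  obtain ⟨v, hv, hMv, hGv⟩ := exists_unit_between_eigenvalues hM hG i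
  calc hG.eigenvalues i
      ≤ RCLike.re (star v ⬝ᵥ ((∑ k, w k • cfc g (X k)) *ᵥ v)) := hGv
    _ = ∑ k, w k • RCLike.re (star v ⬝ᵥ (cfc g (X k) *ᵥ v)) := re_dotProduct_sum_smul_mulVec ..
    _ ≤ ∑ k, w k • g (RCLike.re (star v ⬝ᵥ (X k *ᵥ v))) := by
        gcongr with k
        · exact hw k
        · exact re_dotProduct_cfc_mulVec_le_of_concaveOn (hX k) hg (hXs k) hv
    _ ≤ g (∑ k, w k • RCLike.re (star v ⬝ᵥ (X k *ᵥ v))) :=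
        hg.le_map_sum (fun k _ => hw k) hw1 fun k _ => hmem v hv k
    _ = g (RCLike.re (star v ⬝ᵥ ((∑ k, w k • X k) *ᵥ v))) := by
        rw [re_dotProduct_sum_smul_mulVec]
    _ ≤ g (hM.eigenvalues i) := hmono (hMmem v hv)
        (eigenvalues_mem_of_forall_re_dotProduct_mulVec_mem hM hMmem i) hMv

theorem posSemidef_cfc {φ : ℝ → ℝ} (hA : A.PosSemidef) (h : ∀ x ∈ Ici 0, 0 ≤ φ x) :
    (cfc φ A).PosSemidef := by
  rw [cfc_eq_mul_diagonal_mul hA.1, star_eq_conjTranspose]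
  refine PosSemidef.mul_mul_conjTranspose_same (PosSemidef.diagonal fun i => ?_) _
  exact RCLike.ofReal_nonneg.2 (h _ (hA.eigenvalues_nonneg i))

theorem cfc_congr_of_posSemidef {φ ψ : ℝ → ℝ} (hA : A.PosSemidef) (h : EqOn φ ψ (Ici 0)) :
    cfc φ A = cfc ψ A := by
  have hsub : spectrum ℝ A ⊆ Ici 0 := by
    rw [hA.1.spectrum_real_eq_range_eigenvalues]
    exact range_subset_iff.2 hA.eigenvalues_nonneg
  exact cfc_congr (h.mono hsub)

theorem cfc_cfc (hA : A.IsHermitian) (φ ψ : ℝ → ℝ) :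
    cfc φ (cfc ψ A) = cfc (fun x => φ (ψ x)) A := by
  have hfin : (spectrum ℝ A).Finite := Matrix.finite_real_spectrum
  exact (cfc_comp' φ ψ A ((hfin.image ψ).continuousOn φ) (hfin.continuousOn ψ)
    hA.isSelfAdjoint).symm

theorem exists_unitary_posSemidef_cfc_sub (hA : A.IsHermitian) (hB : B.IsHermitian) {φ ψ : ℝ → ℝ}
    (h : ∀ i, ψ (hB.eigenvalues i) ≤ φ (hA.eigenvalues i)) :
    ∃ V ∈ unitaryGroup ι 𝕜, (cfc φ A - V * cfc ψ B * star V).PosSemidef := by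
  set U := hA.eigenvectorUnitary
  set W := hB.eigenvectorUnitary with hW
  refine ⟨_, (U * star W).2, ?_⟩
  have hconj : (↑(U * star W) : Matrix ι ι 𝕜) * cfc ψ B * star (↑(U * star W) : Matrix ι ι 𝕜) =
      (U : Matrix ι ι 𝕜) * diagonal (RCLike.ofReal ∘ ψ ∘ hB.eigenvalues) *
        star (U : Matrix ι ι 𝕜) := by
    rw [hB.cfc_eq, IsHermitian.cfc, ← Unitary.conjStarAlgAut_apply (S := 𝕜),
      ← Unitary.conjStarAlgAut_mul_apply, ← hW, mul_assoc, Unitary.star_mul_self, mul_one,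
      Unitary.conjStarAlgAut_apply]
  rw [hconj, cfc_eq_mul_diagonal_mul hA, ← sub_mul, ← mul_sub, diagonal_sub, star_eq_conjTranspose]
  refine PosSemidef.mul_mul_conjTranspose_same (PosSemidef.diagonal fun i => ?_) _
  rw [Pi.zero_apply, sub_nonneg]
  exact RCLike.ofReal_le_ofReal.2 (h i)

end QuadraticForm

section PowerMean

open Set

variable {𝕜 ι κ : Type*} [RCLike 𝕜] [Fintype ι] [DecidableEq ι] [Fintype κ]

/-- The weighted power mean `(∑ k, w k • A k ^ p) ^ (1 / p)` of a family of positive semidefinite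
matrices, with powers taken by functional calculus. -/
noncomputable def powerMean (w : κ → ℝ) (p : ℝ) (A : κ → Matrix ι ι 𝕜) : Matrix ι ι 𝕜 :=
  cfc (fun x : ℝ => x ^ (1 / p)) (∑ k, w k • cfc (fun x : ℝ => x ^ p) (A k))

theorem cfc_rpow_cfc_eq_cfc_cfc_rpow {A : Matrix ι ι 𝕜} (hA : A.PosSemidef) (f : ℝ → ℝ) {p : ℝ}
    (hp : p ≠ 0) :
    cfc (fun x : ℝ => x ^ p) (cfc f A) =
      cfc (fun t => f (t ^ (1 / p)) ^ p) (cfc (fun x : ℝ => x ^ p) A) := by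
  rw [cfc_cfc hA.1, cfc_cfc hA.1]
  refine cfc_congr_of_posSemidef hA fun x hx => ?_
  simp only [one_div, Real.rpow_rpow_inv hx hp]

theorem stmt_3_general {f : ℝ → ℝ} (hf : DoublyConcaveOn f (Ici 0)) {w : κ → ℝ}
    (hw : ∀ k, 0 ≤ w k) (hw1 : ∑ k, w k = 1) {p : ℝ} (hp : 0 < p) {A : κ → Matrix ι ι 𝕜}
    (hA : ∀ k, (A k).PosSemidef) :
    ∃ V ∈ Matrix.unitaryGroup ι 𝕜,
      (cfc f (powerMean w p A) - V * powerMean w p (fun k => cfc f (A k)) * star V).PosSemidef := by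
  set g : ℝ → ℝ := fun t => f (t ^ (1 / p)) ^ p
  have hgc : ConcaveOn ℝ (Ici 0) g := hf.concaveOn_rpow_comp_rpow hp
  have hf0 (t : ℝ) (ht : t ∈ Ici 0) : 0 ≤ f (t ^ (1 / p)) := hf.nonneg _ (Real.rpow_nonneg ht _)
  have hg0 (t : ℝ) (ht : t ∈ Ici 0) : 0 ≤ g t := Real.rpow_nonneg (hf0 t ht) p
  have hX (k : κ) : (cfc (fun x : ℝ => x ^ p) (A k)).PosSemidef :=
    posSemidef_cfc (hA k) fun x hx => Real.rpow_nonneg hx p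
  have hM := Matrix.posSemidef_sum Finset.univ fun k _ => (hX k).smul (hw k)
  have hG := Matrix.posSemidef_sum Finset.univ fun k _ => (posSemidef_cfc (hX k) hg0).smul (hw k)
  simp only [powerMean, cfc_rpow_cfc_eq_cfc_cfc_rpow (hA _) f hp.ne', cfc_cfc hM.1]
  refine exists_unitary_posSemidef_cfc_sub hM.1 hG.1 fun i => ?_
  calc hG.1.eigenvalues i ^ (1 / p)
      ≤ g (hM.1.eigenvalues i) ^ (1 / p) := Real.rpow_le_rpow (hG.eigenvalues_nonneg i)
        (eigenvalues_sum_smul_cfc_le hgc (monotoneOn_Ici_of_concaveOn_of_nonneg hgc hg0) hw hw1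
          (fun k => (hX k).1) (fun k => (hX k).eigenvalues_nonneg) hM.1 hG.1 i) (by positivity)
    _ = f (hM.1.eigenvalues i ^ (1 / p)) := by
        simpa only [g, one_div] using Real.rpow_rpow_inv (hf0 _ (hM.eigenvalues_nonneg i)) hp.ne'

theorem betaP_eq_powerMean {n : ℕ} (p : ℝ) (A B : Matrix (Fin n) (Fin n) ℂ) :
    betaP p A B = powerMean (fun _ : Fin 2 => 2⁻¹) p ![A, B] := by
  rw [betaP, powerMean, Fin.sum_univ_two, ← smul_add]
  congr 1
  ext i j
  simp [mul_add]

end PowerMean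

theorem stmt_3 {n : ℕ} (f : ℝ → ℝ) (hf : DoublyConcaveOn f (Set.Ici 0))
    (A B : Matrix (Fin n) (Fin n) ℂ) (hA : A.PosSemidef) (hB : B.PosSemidef)
    (p : ℝ) (hp0 : 0 < p) (hp1 : p ≤ 1) :
    ∃ V ∈ Matrix.unitaryGroup (Fin n) ℂ,
      (cfc f (betaP p A B) - V * betaP p (cfc f A) (cfc f B) * star V).PosSemidef := by
  have h := stmt_3_general hf (w := fun _ : Fin 2 => 2⁻¹) (by norm_num) (by norm_num) hp0
    (Fin.forall_fin_two.2 ⟨hA, hB⟩ : ∀ k, (![A, B] k).PosSemidef)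
  have hcomp : ![cfc f A, cfc f B] = fun k => cfc f (![A, B] k) := by
    ext k : 1
    fin_cases k <;> rfl
  rwa [betaP_eq_powerMean, betaP_eq_powerMean, hcomp]
end

section
/- Let Ω ⊆ [0,∞) be an interval, let f be a doubly concave function on Ω, let A, B be n×n Hermitian complex matrices with all eigenvalues in Ω, and let p ∈ (0,1] (note that the spectrum of A β_p B automatically lies in Ω). Then det^{1/n} f(A β_p B) ≥ (det^{1/n} f(A)) β_p (det^{1/n} f(B)), where for scalars a,b ≥ 0, a β_p b := ((a^p + b^p)/2)^{1/p}. -/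
open scoped ComplexOrder

/-!
Conjugation by `x ↦ x ^ p` turns the power `p`-mean into the arithmetic mean, so for `A` and `B`
replaced by `A ^ p` and `B ^ p` the claim becomes concavity of `X ↦ det (h X) ^ (1 / n)` for
`h t = f (t ^ (1 / p)) ^ p`. Double concavity of `f` makes `h` concave.

For any nonnegative concave `h`, pass to an orthonormal eigenbasis of `Z = a • X + b • Y`, where the
eigenvalues of `Z` are combinations of diagonal entries of `X` and `Y`. The diagonal of `X` is a
doubly stochastic image of its eigenvalues, so `det (h X)` is at most the product of `h` over that
diagonal. What remains is the concavity of `h` and of the geometric mean.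
-/

section PowerMean

lemma ordConnected_of_isClosed_of_midpoint_mem {S : Set ℝ} (hS : IsClosed S)
    (hmid : ∀ x ∈ S, ∀ y ∈ S, midpoint ℝ x y ∈ S) : S.OrdConnected := by
  refine ⟨fun x hx y hy z hz => ?_⟩
  obtain ⟨l, ⟨⟨hxl, hlz⟩, hl⟩, hl_max⟩ := ((isCompact_Icc (a := x) (b := z)).inter_right
    hS).exists_isGreatest ⟨x, ⟨le_rfl, hz.1⟩, hx⟩
  obtain ⟨r, ⟨⟨hzr, hry⟩, hr⟩, hr_min⟩ := ((isCompact_Icc (a := z) (b := y)).inter_right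
    hS).exists_isLeast ⟨y, ⟨hz.2, le_rfl⟩, hy⟩
  have hm : midpoint ℝ l r = (l + r) / 2 := by
    rw [midpoint_eq_smul_add, smul_eq_mul, invOf_eq_inv, inv_mul_eq_div]
  have hlr : r ≤ l := by
    rcases le_total (midpoint ℝ l r) z with hmz | hzm
    · have : midpoint ℝ l r ≤ l := hl_max ⟨⟨by linarith, hmz⟩, hmid l hl r hr⟩
      linarith
    · have : r ≤ midpoint ℝ l r := hr_min ⟨⟨hzm, by linarith⟩, hmid l hl r hr⟩
      linarith
  rwa [le_antisymm (hzr.trans hlr) hlz]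

variable {a b x y : ℝ}

lemma rpow_mul_rpow_mem_uIcc (hx : 0 ≤ x) (hy : 0 ≤ y) (ha : 0 ≤ a) (hb : 0 ≤ b)
    (hab : a + b = 1) : x ^ a * y ^ b ∈ Set.uIcc x y := by
  have self_mul {z : ℝ} (hz : 0 ≤ z) : z ^ a * z ^ b = z := by
    rw [← Real.rpow_add' hz (by simp [hab]), hab, Real.rpow_one]
  wlog hxy : x ≤ y generalizing x y a b
  · rw [Set.uIcc_comm, mul_comm]
    exact this hy hx hb ha (by rwa [add_comm]) (fun hz => by rw [mul_comm, self_mul hz])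
      (le_of_not_ge hxy)
  rw [Set.uIcc_of_le hxy]
  constructor
  · calc x = x ^ a * x ^ b := (self_mul hx).symm
      _ ≤ x ^ a * y ^ b := by gcongr
  · calc x ^ a * y ^ b ≤ y ^ a * y ^ b := by gcongr
      _ = y := self_mul hy

lemma sqrt_rpow_mul_rpow_mul (hx : 0 < x) (hy : 0 < y) (s t : ℝ) :
    √(x ^ (1 - s) * y ^ s * (x ^ (1 - t) * y ^ t))
      = x ^ (1 - midpoint ℝ s t) * y ^ midpoint ℝ s t := by
  have hm : midpoint ℝ s t = (s + t) / 2 := by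
    rw [midpoint_eq_smul_add, smul_eq_mul, invOf_eq_inv, inv_mul_eq_div]
  rw [Real.sqrt_eq_iff_mul_self_eq_of_pos (by positivity), mul_mul_mul_comm,
    mul_mul_mul_comm (x ^ (1 - s)), ← Real.rpow_add hx, ← Real.rpow_add hy, ← Real.rpow_add hx,
    ← Real.rpow_add hy, hm]
  congr 2 <;> ring

namespace DoublyConcaveOn

variable {f : ℝ → ℝ} {Ω : Set ℝ} (hf : DoublyConcaveOn f Ω)
include hf

lemma rpow_mul_rpow_mem (hx : x ∈ Ω) (hy : y ∈ Ω) (ha : 0 ≤ a) (hb : 0 ≤ b) (hab : a + b = 1) :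
    x ^ a * y ^ b ∈ Ω :=
  hf.concaveOn.1.ordConnected.uIcc_subset hx hy
    (rpow_mul_rpow_mem_uIcc (hf.subset_Ici hx) (hf.subset_Ici hy) ha hb hab)

lemma apply_le_apply_zero (h0 : 0 ∈ Ω) (hf0 : 0 < f 0) (hy : y ∈ Ω) : f y ≤ f 0 := by
  have h := hf.geomConcave 0 h0 y hy
  rw [zero_mul, Real.sqrt_zero, Real.sqrt_le_left hf0.le, sq] at h
  exact le_of_mul_le_mul_left h hf0

lemma apply_rpow_mul_apply_rpow_le_of_pos (hx : x ∈ Ω) (hy : y ∈ Ω) (hx0 : 0 < x) (hy0 : 0 < y)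
    (hfx : 0 < f x) (hfy : 0 < f y) (ha : 0 ≤ a) (hb : 0 ≤ b) (hab : a + b = 1) :
    f x ^ a * f y ^ b ≤ f (x ^ a * y ^ b) := by
  have hmem : ∀ t ∈ Set.Icc (0 : ℝ) 1, x ^ (1 - t) * y ^ t ∈ Ω := fun t ht =>
    hf.rpow_mul_rpow_mem hx hy (sub_nonneg.2 ht.2) ht.1 (sub_add_cancel 1 t)
  have hcont {u v : ℝ} (hu : 0 < u) (hv : 0 < v) : Continuous fun t : ℝ => u ^ (1 - t) * v ^ t := by
    fun_prop (disch := positivity)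
  set S := {t ∈ Set.Icc (0 : ℝ) 1 | f x ^ (1 - t) * f y ^ t ≤ f (x ^ (1 - t) * y ^ t)}
  have hS : IsClosed S := isClosed_Icc.isClosed_le (hcont hfx hfy).continuousOn
    (hf.continuousOn.comp (hcont hx0 hy0).continuousOn hmem)
  have hmid : ∀ s ∈ S, ∀ t ∈ S, midpoint ℝ s t ∈ S := by
    rintro s ⟨hs, hfs⟩ t ⟨ht, hft⟩
    refine ⟨(convex_Icc 0 1).midpoint_mem hs ht, ?_⟩
    calc f x ^ (1 - midpoint ℝ s t) * f y ^ midpoint ℝ s t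
        = √(f x ^ (1 - s) * f y ^ s * (f x ^ (1 - t) * f y ^ t)) :=
          (sqrt_rpow_mul_rpow_mul hfx hfy s t).symm
      _ ≤ √(f (x ^ (1 - s) * y ^ s) * f (x ^ (1 - t) * y ^ t)) :=
          Real.sqrt_le_sqrt (mul_le_mul hfs hft (by positivity) (hf.nonneg _ (hmem s hs)))
      _ ≤ f √(x ^ (1 - s) * y ^ s * (x ^ (1 - t) * y ^ t)) :=
          hf.geomConcave _ (hmem s hs) _ (hmem t ht)
      _ = f (x ^ (1 - midpoint ℝ s t) * y ^ midpoint ℝ s t) := by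
          rw [sqrt_rpow_mul_rpow_mul hx0 hy0]
  have hb_mem : b ∈ S := (ordConnected_of_isClosed_of_midpoint_mem hS hmid).out
    (show (0 : ℝ) ∈ S by simp [S]) (show (1 : ℝ) ∈ S by simp [S]) ⟨hb, by linarith⟩
  rw [eq_sub_of_add_eq hab]
  exact hb_mem.2

lemma apply_rpow_mul_apply_rpow_le (hx : x ∈ Ω) (hy : y ∈ Ω) (ha : 0 ≤ a) (hb : 0 ≤ b)
    (hab : a + b = 1) : f x ^ a * f y ^ b ≤ f (x ^ a * y ^ b) := by
  rcases ha.eq_or_lt with rfl | ha0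
  · simp [show b = 1 by linarith]
  rcases hb.eq_or_lt with rfl | hb0
  · simp [show a = 1 by linarith]
  have hfx := hf.nonneg x hx
  have hfy := hf.nonneg y hy
  have hfxy := hf.nonneg _ (hf.rpow_mul_rpow_mem hx hy ha hb hab)
  rcases hfx.eq_or_lt with hfx0 | hfx0
  · rwa [← hfx0, Real.zero_rpow ha0.ne', zero_mul]
  rcases hfy.eq_or_lt with hfy0 | hfy0
  · rwa [← hfy0, Real.zero_rpow hb0.ne', mul_zero]
  have self_mul {z : ℝ} (hz : 0 < z) : z ^ a * z ^ b = z := by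
    rw [← Real.rpow_add hz, hab, Real.rpow_one]
  rcases (Set.mem_Ici.1 (hf.subset_Ici hx)).eq_or_lt with rfl | hx0
  · calc f 0 ^ a * f y ^ b ≤ f 0 ^ a * f 0 ^ b := by
          gcongr
          exact hf.apply_le_apply_zero hx hfx0 hy
      _ = f (0 ^ a * y ^ b) := by rw [self_mul hfx0, Real.zero_rpow ha0.ne', zero_mul]
  rcases (Set.mem_Ici.1 (hf.subset_Ici hy)).eq_or_lt with rfl | hy0
  · calc f x ^ a * f 0 ^ b ≤ f 0 ^ a * f 0 ^ b := by
          gcongr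
          exact hf.apply_le_apply_zero hy hfy0 hx
      _ = f (x ^ a * 0 ^ b) := by rw [self_mul hfy0, Real.zero_rpow hb0.ne', mul_zero]
  exact hf.apply_rpow_mul_apply_rpow_le_of_pos hx hy hx0 hy0 hfx0 hfy0 ha hb hab

end DoublyConcaveOn

/-- The conjugate `t ↦ f(t^{1/p})^p` of `f` by the power `x ↦ x^p`. It turns the power `p`-mean
into the arithmetic mean, in the argument as well as in the value. -/
noncomputable def rpowConj (p : ℝ) (f : ℝ → ℝ) (t : ℝ) : ℝ := f (t ^ (1 / p)) ^ p

namespace DoublyConcaveOn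

variable {f : ℝ → ℝ} {Ω : Set ℝ} (hf : DoublyConcaveOn f Ω) {p c : ℝ} (hp0 : 0 < p) (hp1 : p ≤ 1)
include hf hp0

include hp1 in
/-- With `u = x^p c^{1-p}` and `v = y^p c^{1-p}` we have `c = a u + b v`, so concavity bounds `f c`
below by `a f(u) + b f(v)`, and geometric concavity bounds that below by
`(a f(x)^p + b f(y)^p) f(c)^{1-p}`. -/
lemma add_apply_rpow_le (hx : x ∈ Ω) (hy : y ∈ Ω) (hc : c ∈ openSegment ℝ x y) (ha : 0 ≤ a)
    (hb : 0 ≤ b) (hab : a + b = 1) (h : a * x ^ p + b * y ^ p = c ^ p) :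
    a * f x ^ p + b * f y ^ p ≤ f c ^ p := by
  have hcΩ : c ∈ Ω := hf.concaveOn.1.openSegment_subset hx hy hc
  have hfx := hf.nonneg x hx
  have hfy := hf.nonneg y hy
  rcases (hf.nonneg c hcΩ).eq_or_lt with hfc | hfc
  · have hfx0 : f x = 0 :=
      le_antisymm ((hf.concaveOn.left_le_of_le_right hx hy hc (hfc ▸ hfy)).trans_eq hfc.symm) hfx
    have hfy0 : f y = 0 :=
      le_antisymm ((hf.concaveOn.right_le_of_le_left hx hy hc (hfc ▸ hfx)).trans_eq hfc.symm) hfy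
    rw [hfx0, hfy0, ← hfc, ← add_mul, hab, one_mul]
  have hq : 0 ≤ 1 - p := sub_nonneg.2 hp1
  have hpq : p + (1 - p) = 1 := add_sub_cancel p 1
  have hc_eq : a * (x ^ p * c ^ (1 - p)) + b * (y ^ p * c ^ (1 - p)) = c := by
    rw [← mul_assoc, ← mul_assoc, ← add_mul, h,
      ← Real.rpow_add' (hf.subset_Ici hcΩ) (by simp), hpq, Real.rpow_one]
  refine le_of_mul_le_mul_right ?_ (Real.rpow_pos_of_pos hfc (1 - p))
  calc (a * f x ^ p + b * f y ^ p) * f c ^ (1 - p)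
      = a * (f x ^ p * f c ^ (1 - p)) + b * (f y ^ p * f c ^ (1 - p)) := by ring
    _ ≤ a * f (x ^ p * c ^ (1 - p)) + b * f (y ^ p * c ^ (1 - p)) := by
        gcongr
        exacts [hf.apply_rpow_mul_apply_rpow_le hx hcΩ hp0.le hq hpq,
          hf.apply_rpow_mul_apply_rpow_le hy hcΩ hp0.le hq hpq]
    _ ≤ f (a * (x ^ p * c ^ (1 - p)) + b * (y ^ p * c ^ (1 - p))) :=
        hf.concaveOn.2 (hf.rpow_mul_rpow_mem hx hcΩ hp0.le hq hpq)
          (hf.rpow_mul_rpow_mem hy hcΩ hp0.le hq hpq) ha hb hab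
    _ = f c ^ p * f c ^ (1 - p) := by rw [hc_eq, ← Real.rpow_add hfc, hpq, Real.rpow_one]

omit hp0 in
lemma rpow_inv_mem (hp : p ≠ 0) {t : ℝ} (ht : t ∈ (fun x : ℝ => x ^ p) '' Ω) :
    t ^ (1 / p) ∈ Ω := by
  obtain ⟨x, hx, rfl⟩ := ht
  rwa [one_div, Real.rpow_rpow_inv (hf.subset_Ici hx) hp]

lemma rpowConj_rpow (hx : x ∈ Ω) : rpowConj p f (x ^ p) = f x ^ p := by
  rw [rpowConj, one_div, Real.rpow_rpow_inv (hf.subset_Ici hx) hp0.ne']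

lemma convex_image_rpow : Convex ℝ ((fun x : ℝ => x ^ p) '' Ω) :=
  (hf.concaveOn.1.isPreconnected.image _
    (Real.continuous_rpow_const hp0.le).continuousOn).ordConnected.convex

include hp1 in
lemma concaveOn_rpowConj : ConcaveOn ℝ ((fun x : ℝ => x ^ p) '' Ω) (rpowConj p f) := by
  refine LinearOrder.concaveOn_of_lt (hf.convex_image_rpow hp0) ?_
  rintro _ ⟨x, hx, rfl⟩ _ ⟨y, hy, rfl⟩ hxy a b ha hb hab
  have hx0 : 0 ≤ x := hf.subset_Ici hx
  have hy0 : 0 ≤ y := hf.subset_Ici hy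
  obtain ⟨c, hc, hc_eq⟩ := hf.convex_image_rpow hp0 (Set.mem_image_of_mem _ hx)
    (Set.mem_image_of_mem _ hy) ha.le hb.le hab
  have hc0 : 0 ≤ c := hf.subset_Ici hc
  have hcp : c ^ p ∈ Set.Ioo (x ^ p) (y ^ p) := by
    rw [← openSegment_eq_Ioo hxy]
    exact ⟨a, b, ha, hb, hab, hc_eq.symm⟩
  have hc_seg : c ∈ openSegment ℝ x y := by
    have hxc : x < c := (Real.rpow_lt_rpow_iff hx0 hc0 hp0).1 hcp.1
    have hcy : c < y := (Real.rpow_lt_rpow_iff hc0 hy0 hp0).1 hcp.2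
    rw [openSegment_eq_Ioo (hxc.trans hcy)]
    exact ⟨hxc, hcy⟩
  rw [← hc_eq]
  simp only [hf.rpowConj_rpow hp0 hx, hf.rpowConj_rpow hp0 hy, hf.rpowConj_rpow hp0 hc, smul_eq_mul]
  exact hf.add_apply_rpow_le hp0 hp1 hx hy hc_seg ha.le hb.le hab hc_eq.symm

end DoublyConcaveOn

end PowerMean

section WeightedGeomMean

variable {ι : Type*} [Fintype ι]

lemma concaveOn_prod_rpow {w : ι → ℝ} (hw : ∀ i, 0 ≤ w i) (hw1 : ∑ i, w i = 1) :
    ConcaveOn ℝ (Set.Ici 0) fun x : ι → ℝ => ∏ i, x i ^ w i := by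
  refine concaveOn_iff_forall_pos.2 ⟨convex_Ici 0, fun x hx y hy a b ha hb _ => ?_⟩
  set z := a • x + b • y
  have hz (i : ι) : a * x i + b * y i = z i := rfl
  have hz0 : 0 ≤ z := add_nonneg (smul_nonneg ha.le hx) (smul_nonneg hb.le hy)
  have am_gm {u : ι → ℝ} (hu : 0 ≤ u) (huz : ∀ i, z i = 0 → u i = 0) :
      ∏ i, u i ^ w i ≤ (∏ i, z i ^ w i) * ∑ i, w i * (u i / z i) :=
    calc ∏ i, u i ^ w i = (∏ i, z i ^ w i) * ∏ i, (u i / z i) ^ w i := by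
          rw [← Finset.prod_mul_distrib]
          refine Finset.prod_congr rfl fun i _ => ?_
          rw [← Real.mul_rpow (hz0 i) (div_nonneg (hu i) (hz0 i)), mul_div_cancel_of_imp' (huz i)]
      _ ≤ (∏ i, z i ^ w i) * ∑ i, w i * (u i / z i) := by
          gcongr
          · exact Finset.prod_nonneg fun i _ => Real.rpow_nonneg (hz0 i) _
          · exact Real.geom_mean_le_arith_mean_weighted _ _ _ (fun i _ => hw i) hw1
              fun i _ => div_nonneg (hu i) (hz0 i)
  have hz_zero (i : ι) (h : z i = 0) : x i = 0 ∧ y i = 0 := by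
    rw [← hz, add_eq_zero_iff_of_nonneg (mul_nonneg ha.le (hx i)) (mul_nonneg hb.le (hy i))] at h
    simpa [ha.ne', hb.ne'] using h
  have hsum : a * ∑ i, w i * (x i / z i) + b * ∑ i, w i * (y i / z i) ≤ 1 := by
    rw [Finset.mul_sum, Finset.mul_sum, ← Finset.sum_add_distrib, ← hw1]
    refine Finset.sum_le_sum fun i _ => ?_
    calc a * (w i * (x i / z i)) + b * (w i * (y i / z i)) = w i * (z i / z i) := by
          rw [← hz]; ring
      _ ≤ w i := mul_le_of_le_one_right (hw i) (div_self_le_one _)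
  calc a * ∏ i, x i ^ w i + b * ∏ i, y i ^ w i
      ≤ a * ((∏ i, z i ^ w i) * ∑ i, w i * (x i / z i))
        + b * ((∏ i, z i ^ w i) * ∑ i, w i * (y i / z i)) := by
        gcongr
        exacts [am_gm hx fun i h => (hz_zero i h).1, am_gm hy fun i h => (hz_zero i h).2]
    _ = (∏ i, z i ^ w i) * (a * ∑ i, w i * (x i / z i) + b * ∑ i, w i * (y i / z i)) := by ring
    _ ≤ ∏ i, z i ^ w i :=
        mul_le_of_le_one_right (Finset.prod_nonneg fun i _ => Real.rpow_nonneg (hz0 i) _) hsum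

lemma concaveOn_prod_apply_rpow {w : ι → ℝ} (hw : ∀ i, 0 ≤ w i) (hw1 : ∑ i, w i = 1) {s : Set ℝ}
    {h : ℝ → ℝ} (hh : ConcaveOn ℝ s h) (h0 : ∀ t ∈ s, 0 ≤ h t) :
    ConcaveOn ℝ (Set.univ.pi fun _ => s) fun x : ι → ℝ => ∏ i, h (x i) ^ w i := by
  refine ⟨convex_pi fun _ _ => hh.1, fun x hx y hy a b ha hb hab => ?_⟩
  have hx0 (i : ι) : 0 ≤ h (x i) := h0 _ (hx i trivial)
  have hy0 (i : ι) : 0 ≤ h (y i) := h0 _ (hy i trivial)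
  have hxy0 (i : ι) : 0 ≤ a * h (x i) + b * h (y i) :=
    add_nonneg (mul_nonneg ha (hx0 i)) (mul_nonneg hb (hy0 i))
  calc a * ∏ i, h (x i) ^ w i + b * ∏ i, h (y i) ^ w i
      ≤ ∏ i, (a * h (x i) + b * h (y i)) ^ w i :=
        (concaveOn_prod_rpow hw hw1).2 hx0 hy0 ha hb hab
    _ ≤ ∏ i, h (a * x i + b * y i) ^ w i :=
        Finset.prod_le_prod (fun i _ => Real.rpow_nonneg (hxy0 i) _) fun i _ =>
          Real.rpow_le_rpow (hxy0 i) (hh.2 (hx i trivial) (hy i trivial) ha hb hab) (hw i)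

end WeightedGeomMean

section Matrix

open Matrix

variable {ι 𝕜 : Type*} [Fintype ι] [DecidableEq ι] [RCLike 𝕜]

lemma prod_le_prod_mulVec {S : Matrix ι ι ℝ} (hS : S ∈ doublyStochastic ℝ ι) {x : ι → ℝ}
    (hx : 0 ≤ x) : ∏ j, x j ≤ ∏ i, (S *ᵥ x) i :=
  calc ∏ j, x j = ∏ j, ∏ i, x j ^ S i j := by
        refine Finset.prod_congr rfl fun j _ => ?_
        rw [← Real.rpow_sum_of_nonneg (hx j) fun i _ => nonneg_of_mem_doublyStochastic hS,
          sum_col_of_mem_doublyStochastic hS, Real.rpow_one]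
    _ = ∏ i, ∏ j, x j ^ S i j := Finset.prod_comm
    _ ≤ ∏ i, (S *ᵥ x) i := by
        refine Finset.prod_le_prod
          (fun i _ => Finset.prod_nonneg fun j _ => Real.rpow_nonneg (hx j) _) fun i _ => ?_
        exact Real.geom_mean_le_arith_mean_weighted _ _ _
          (fun j _ => nonneg_of_mem_doublyStochastic hS) (sum_row_of_mem_doublyStochastic hS i)
          fun j _ => hx j

lemma of_norm_sq_mem_doublyStochastic (U : unitaryGroup ι 𝕜) :
    of (fun i j => ‖U.1 i j‖ ^ 2) ∈ doublyStochastic ℝ ι := by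
  rw [mem_doublyStochastic_iff_sum]
  refine ⟨fun i j => sq_nonneg _, fun i => ?_, fun j => ?_⟩
  · have h := congrFun (congrFun (mem_unitaryGroup_iff.1 U.2) i) i
    simp only [mul_apply, star_apply, RCLike.star_def, RCLike.mul_conj, one_apply_eq] at h
    exact_mod_cast h
  · have h := congrFun (congrFun (mem_unitaryGroup_iff'.1 U.2) j) j
    simp only [mul_apply, star_apply, RCLike.star_def, RCLike.conj_mul, one_apply_eq] at h
    exact_mod_cast h

variable {A : Matrix ι ι 𝕜} {s : Set ℝ} {h : ℝ → ℝ}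

/-- The Hermitian matrices with spectrum in `s`: those to which the functional calculus applies
functions given on `s`. -/
def hermitianWithSpectrumIn (ι 𝕜 : Type*) [Fintype ι] [DecidableEq ι] [RCLike 𝕜] (s : Set ℝ) :
    Set (Matrix ι ι 𝕜) :=
  {X | X.IsHermitian ∧ spectrum ℝ X ⊆ s}

lemma eigenvalues_mem_of_mem (hA : A ∈ hermitianWithSpectrumIn ι 𝕜 s) (i : ι) :
    hA.1.eigenvalues i ∈ s :=
  hA.2 (hA.1.eigenvalues_mem_spectrum_real i)

lemma cfc_mem_hermitianWithSpectrumIn (hA : A ∈ hermitianWithSpectrumIn ι 𝕜 s) (g : ℝ → ℝ) :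
    cfc g A ∈ hermitianWithSpectrumIn ι 𝕜 (g '' s) := by
  refine ⟨cfc_predicate g A, ?_⟩
  rw [cfc_map_spectrum g A hA.1.isSelfAdjoint (A.finite_real_spectrum.continuousOn g)]
  exact Set.image_mono hA.2

/-- The diagonal of `U * A * Uᴴ`, as a linear map in `A`. Only real parts are kept, since the
diagonal of a Hermitian matrix is real. -/
noncomputable def conjDiag (U : unitaryGroup ι 𝕜) : Matrix ι ι 𝕜 →ₗ[ℝ] ι → ℝ where
  toFun A i := RCLike.re (Unitary.conjStarAlgAut 𝕜 _ U A i i)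
  map_add' A B := by ext i; simp only [map_add, Matrix.add_apply, Pi.add_apply]
  map_smul' c A := by
    ext i
    rw [RCLike.real_smul_eq_coe_smul (K := 𝕜) c A, map_smul]
    simp

lemma conjDiag_star_eigenvectorUnitary (hA : A.IsHermitian) :
    conjDiag (star hA.eigenvectorUnitary) A = hA.eigenvalues := by
  ext i
  change RCLike.re (Unitary.conjStarAlgAut 𝕜 _ (star hA.eigenvectorUnitary) A i i) = _
  rw [hA.conjStarAlgAut_star_eigenvectorUnitary, diagonal_apply_eq, Function.comp_apply,
    RCLike.ofReal_re]

lemma exists_conjDiag_eq_mulVec_eigenvalues (hA : A.IsHermitian) (U : unitaryGroup ι 𝕜) :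
    ∃ S ∈ doublyStochastic ℝ ι, conjDiag U A = S *ᵥ hA.eigenvalues := by
  refine ⟨_, of_norm_sq_mem_doublyStochastic (U * hA.eigenvectorUnitary), funext fun i => ?_⟩
  have hentry : Unitary.conjStarAlgAut 𝕜 _ U A i i
      = ((of (fun i j => ‖(U * hA.eigenvectorUnitary).1 i j‖ ^ 2) *ᵥ hA.eigenvalues) i : ℝ) := by
    conv_lhs => rw [hA.spectral_theorem, ← Unitary.conjStarAlgAut_mul_apply,
      Unitary.conjStarAlgAut_apply, mul_apply]
    simp only [mul_diagonal, star_apply, mulVec, dotProduct, of_apply, RCLike.ofReal_sum,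
      RCLike.ofReal_mul, RCLike.ofReal_pow, ← RCLike.mul_conj, RCLike.star_def,
      Function.comp_apply]
    exact Finset.sum_congr rfl fun j _ => mul_right_comm _ _ _
  exact (congrArg RCLike.re hentry).trans (RCLike.ofReal_re _)

lemma conjDiag_apply_mem (hs : Convex ℝ s) (hA : A ∈ hermitianWithSpectrumIn ι 𝕜 s)
    (U : unitaryGroup ι 𝕜) (i : ι) : conjDiag U A i ∈ s := by
  obtain ⟨S, hS, hdiag⟩ := exists_conjDiag_eq_mulVec_eigenvalues hA.1 U
  rw [hdiag]
  exact hs.sum_mem (fun _ _ => nonneg_of_mem_doublyStochastic hS)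
    (sum_row_of_mem_doublyStochastic hS i) fun j _ => eigenvalues_mem_of_mem hA j

lemma convex_hermitianWithSpectrumIn (hs : Convex ℝ s) :
    Convex ℝ (hermitianWithSpectrumIn ι 𝕜 s) := by
  intro X hX Y hY a b ha hb hab
  have hZ : (a • X + b • Y).IsHermitian :=
    ((IsSelfAdjoint.all a).smul hX.1.isSelfAdjoint).add
      ((IsSelfAdjoint.all b).smul hY.1.isSelfAdjoint)
  refine ⟨hZ, ?_⟩
  rw [hZ.spectrum_real_eq_range_eigenvalues, ← conjDiag_star_eigenvectorUnitary, map_add, map_smul,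
    map_smul]
  rintro _ ⟨i, rfl⟩
  exact hs (conjDiag_apply_mem hs hX _ i) (conjDiag_apply_mem hs hY _ i) ha hb hab

lemma re_det_cfc (hA : A.IsHermitian) (g : ℝ → ℝ) :
    RCLike.re (cfc g A).det = ∏ i, g (hA.eigenvalues i) := by
  have hdet : (cfc g A).det = ((∏ i, g (hA.eigenvalues i) : ℝ) : 𝕜) := by
    rw [hA.cfc_eq, Matrix.IsHermitian.cfc, Unitary.conjStarAlgAut_apply, det_mul_right_comm,
      Unitary.mul_star_self_of_mem hA.eigenvectorUnitary.2, one_mul, det_diagonal]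
    simp only [Function.comp_apply, RCLike.ofReal_prod]
  rw [hdet, RCLike.ofReal_re]

lemma re_det_cfc_nonneg (hA : A ∈ hermitianWithSpectrumIn ι 𝕜 s) (h0 : ∀ t ∈ s, 0 ≤ h t) :
    0 ≤ RCLike.re (cfc h A).det := by
  rw [re_det_cfc hA.1]
  exact Finset.prod_nonneg fun i _ => h0 _ (eigenvalues_mem_of_mem hA i)

lemma re_det_cfc_rpow (hA : A ∈ hermitianWithSpectrumIn ι 𝕜 s) (h0 : ∀ t ∈ s, 0 ≤ h t) (p : ℝ) :
    RCLike.re (cfc (fun t => h t ^ p) A).det = RCLike.re (cfc h A).det ^ p := by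
  rw [re_det_cfc hA.1, re_det_cfc hA.1, Real.finsetProd_rpow]
  exact fun i _ => h0 _ (eigenvalues_mem_of_mem hA i)

/-- Hadamard's determinant inequality is the case `h t = t` on `[0, ∞)`. -/
lemma re_det_cfc_le_prod_conjDiag (hA : A ∈ hermitianWithSpectrumIn ι 𝕜 s)
    (hh : ConcaveOn ℝ s h) (h0 : ∀ t ∈ s, 0 ≤ h t) (U : unitaryGroup ι 𝕜) :
    RCLike.re (cfc h A).det ≤ ∏ i, h (conjDiag U A i) := by
  obtain ⟨S, hS, hdiag⟩ := exists_conjDiag_eq_mulVec_eigenvalues hA.1 U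
  have hS0 {i j : ι} : 0 ≤ S i j := nonneg_of_mem_doublyStochastic hS
  have h_eig : 0 ≤ h ∘ hA.1.eigenvalues := fun j => h0 _ (eigenvalues_mem_of_mem hA j)
  calc RCLike.re (cfc h A).det = ∏ j, (h ∘ hA.1.eigenvalues) j := re_det_cfc hA.1 h
    _ ≤ ∏ i, (S *ᵥ (h ∘ hA.1.eigenvalues)) i := prod_le_prod_mulVec hS h_eig
    _ ≤ ∏ i, h ((S *ᵥ hA.1.eigenvalues) i) :=
        Finset.prod_le_prod (fun i _ => Finset.sum_nonneg fun j _ => mul_nonneg hS0 (h_eig j))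
          fun i _ => hh.le_map_sum (fun _ _ => hS0) (sum_row_of_mem_doublyStochastic hS i)
            fun j _ => eigenvalues_mem_of_mem hA j
    _ = ∏ i, h (conjDiag U A i) := by rw [hdiag]

lemma concaveOn_re_det_cfc_rpow [Nonempty ι] (hh : ConcaveOn ℝ s h) (h0 : ∀ t ∈ s, 0 ≤ h t) :
    ConcaveOn ℝ (hermitianWithSpectrumIn ι 𝕜 s)
      fun X => RCLike.re (cfc h X).det ^ (Fintype.card ι : ℝ)⁻¹ := by
  have hK := convex_hermitianWithSpectrumIn (ι := ι) (𝕜 := 𝕜) hh.1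
  refine ⟨hK, fun X hX Y hY a b ha hb hab => ?_⟩
  obtain ⟨hZ, -⟩ := hK hX hY ha hb hab
  set r := (Fintype.card ι : ℝ)⁻¹
  have hr : 0 ≤ r := by positivity
  set d := conjDiag (star hZ.eigenvectorUnitary)
  have hd {W : Matrix ι ι 𝕜} (hW : W ∈ hermitianWithSpectrumIn ι 𝕜 s) (i : ι) : d W i ∈ s :=
    conjDiag_apply_mem hh.1 hW _ i
  have hd0 {W : Matrix ι ι 𝕜} (hW : W ∈ hermitianWithSpectrumIn ι 𝕜 s) (i : ι) : 0 ≤ h (d W i) :=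
    h0 _ (hd hW i)
  have hadamard {W : Matrix ι ι 𝕜} (hW : W ∈ hermitianWithSpectrumIn ι 𝕜 s) :
      RCLike.re (cfc h W).det ^ r ≤ ∏ i, h (d W i) ^ r := by
    rw [Real.finsetProd_rpow _ _ fun i _ => hd0 hW i]
    exact Real.rpow_le_rpow (re_det_cfc_nonneg hW h0)
      (re_det_cfc_le_prod_conjDiag hW hh h0 _) hr
  calc a • RCLike.re (cfc h X).det ^ r + b • RCLike.re (cfc h Y).det ^ r
      ≤ a • ∏ i, h (d X i) ^ r + b • ∏ i, h (d Y i) ^ r := by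
        gcongr
        exacts [hadamard hX, hadamard hY]
    _ ≤ ∏ i, h ((a • d X + b • d Y) i) ^ r :=
        (concaveOn_prod_apply_rpow (fun _ => hr) (by simp [r]) hh h0).2
          (fun i _ => hd hX i) (fun i _ => hd hY i) ha hb hab
    _ = ∏ i, h (d (a • X + b • Y) i) ^ r := by rw [map_add, map_smul, map_smul]
    _ = (∏ i, h (d (a • X + b • Y) i)) ^ r :=
        Real.finsetProd_rpow _ _ (fun i _ => hd0 (hK hX hY ha hb hab) i) r
    _ = RCLike.re (cfc h (a • X + b • Y)).det ^ r := by
        rw [re_det_cfc hZ, conjDiag_star_eigenvectorUnitary hZ]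

end Matrix

section FunctionalCalculus

variable {ι 𝕜 : Type*} [Fintype ι] [DecidableEq ι] [RCLike 𝕜] {A : Matrix ι ι 𝕜} {p : ℝ}

lemma cfc_rpow_inv_cfc_rpow {s : Set ℝ} (hs : s ⊆ Set.Ici 0)
    (hA : A ∈ hermitianWithSpectrumIn ι 𝕜 s) (hp : p ≠ 0) :
    cfc (fun x : ℝ => x ^ (1 / p)) (cfc (fun x : ℝ => x ^ p) A) = A := by
  have hfin := A.finite_real_spectrum
  rw [← cfc_comp' _ _ A ((hfin.image _).continuousOn _) (hfin.continuousOn _) hA.1.isSelfAdjoint,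
    cfc_congr fun x hx => by rw [one_div, Real.rpow_rpow_inv (hs (hA.2 hx)) hp]]
  exact cfc_id' ℝ A hA.1.isSelfAdjoint

lemma re_det_cfc_rpowConj {f : ℝ → ℝ} {s : Set ℝ} (hA : A ∈ hermitianWithSpectrumIn ι 𝕜 s)
    (hf : ∀ t ∈ s, 0 ≤ f (t ^ (1 / p))) :
    RCLike.re (cfc (rpowConj p f) A).det
      = RCLike.re (cfc f (cfc (fun x : ℝ => x ^ (1 / p)) A)).det ^ p := by
  have hfin := A.finite_real_spectrum
  rw [← cfc_comp' f _ A ((hfin.image _).continuousOn _) (hfin.continuousOn _) hA.1.isSelfAdjoint,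
    ← re_det_cfc_rpow hA hf]
  rfl

namespace DoublyConcaveOn

variable {f : ℝ → ℝ} {Ω : Set ℝ} (hf : DoublyConcaveOn f Ω)
include hf

lemma cfc_rpow_inv_mem (hA : A ∈ hermitianWithSpectrumIn ι 𝕜 ((fun x : ℝ => x ^ p) '' Ω))
    (hp : p ≠ 0) : cfc (fun x : ℝ => x ^ (1 / p)) A ∈ hermitianWithSpectrumIn ι 𝕜 Ω := by
  have hmem := cfc_mem_hermitianWithSpectrumIn hA fun x : ℝ => x ^ (1 / p)
  exact ⟨hmem.1, hmem.2.trans (Set.image_subset_iff.2 fun _ => hf.rpow_inv_mem hp)⟩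

lemma concaveOn_re_det_cfc_rpow_inv [Nonempty ι] (hp0 : 0 < p) (hp1 : p ≤ 1) :
    ConcaveOn ℝ (hermitianWithSpectrumIn ι 𝕜 ((fun x : ℝ => x ^ p) '' Ω))
      fun X => (RCLike.re (cfc f (cfc (fun x : ℝ => x ^ (1 / p)) X)).det
        ^ (Fintype.card ι : ℝ)⁻¹) ^ p := by
  have h0 (t : ℝ) (ht : t ∈ (fun x : ℝ => x ^ p) '' Ω) : 0 ≤ f (t ^ (1 / p)) :=
    hf.nonneg _ (hf.rpow_inv_mem hp0.ne' ht)
  refine (concaveOn_re_det_cfc_rpow (hf.concaveOn_rpowConj hp0 hp1)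
    fun t ht => Real.rpow_nonneg (h0 t ht) p).congr fun X hX => ?_
  have hdet : 0 ≤ RCLike.re (cfc f (cfc (fun x : ℝ => x ^ (1 / p)) X)).det :=
    re_det_cfc_nonneg (hf.cfc_rpow_inv_mem hX hp0.ne') hf.nonneg
  simp only [re_det_cfc_rpowConj hX h0]
  rw [← Real.rpow_mul hdet, mul_comm, Real.rpow_mul hdet]

end DoublyConcaveOn

end FunctionalCalculus

lemma betaP_eq_cfc_smul_add_smul {n : ℕ} (p : ℝ) (A B : Matrix (Fin n) (Fin n) ℂ) :
    betaP p A B = cfc (fun x : ℝ => x ^ (1 / p))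
      ((1 / 2 : ℝ) • cfc (fun x : ℝ => x ^ p) A + (1 / 2 : ℝ) • cfc (fun x : ℝ => x ^ p) B) := by
  rw [betaP, ← smul_add, RCLike.real_smul_eq_coe_smul (K := ℂ)]
  norm_num

theorem stmt_4_general {ι 𝕜 : Type*} [Fintype ι] [DecidableEq ι] [Nonempty ι] [RCLike 𝕜]
    {f : ℝ → ℝ} {Ω : Set ℝ} (hf : DoublyConcaveOn f Ω) {A B : Matrix ι ι 𝕜}
    (hA : A ∈ hermitianWithSpectrumIn ι 𝕜 Ω) (hB : B ∈ hermitianWithSpectrumIn ι 𝕜 Ω)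
    {a b : ℝ} (ha : 0 ≤ a) (hb : 0 ≤ b) (hab : a + b = 1) {p : ℝ} (hp0 : 0 < p) (hp1 : p ≤ 1) :
    (a * (RCLike.re (cfc f A).det ^ (Fintype.card ι : ℝ)⁻¹) ^ p
        + b * (RCLike.re (cfc f B).det ^ (Fintype.card ι : ℝ)⁻¹) ^ p) ^ (1 / p)
      ≤ RCLike.re (cfc f (cfc (fun x : ℝ => x ^ (1 / p))
          (a • cfc (fun x : ℝ => x ^ p) A + b • cfc (fun x : ℝ => x ^ p) B))).det
        ^ (Fintype.card ι : ℝ)⁻¹ := by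
  have hX := cfc_mem_hermitianWithSpectrumIn hA fun x : ℝ => x ^ p
  have hY := cfc_mem_hermitianWithSpectrumIn hB fun x : ℝ => x ^ p
  have hconc := hf.concaveOn_re_det_cfc_rpow_inv (ι := ι) (𝕜 := 𝕜) hp0 hp1
  have hM := hf.cfc_rpow_inv_mem (hconc.1 hX hY ha hb hab) hp0.ne'
  have hle := hconc.2 hX hY ha hb hab
  simp only [cfc_rpow_inv_cfc_rpow hf.subset_Ici hA hp0.ne',
    cfc_rpow_inv_cfc_rpow hf.subset_Ici hB hp0.ne', smul_eq_mul] at hle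
  have hA0 := re_det_cfc_nonneg hA hf.nonneg
  have hB0 := re_det_cfc_nonneg hB hf.nonneg
  have hM0 := re_det_cfc_nonneg hM hf.nonneg
  simpa only [one_div] using
    (Real.rpow_inv_le_iff_of_pos (by positivity) (by positivity) hp0).2 hle

theorem stmt_4 {n : ℕ} (hn : 0 < n) (f : ℝ → ℝ) (Ω : Set ℝ) (hf : DoublyConcaveOn f Ω)
    (A B : Matrix (Fin n) (Fin n) ℂ) (hA : A.IsHermitian) (hB : B.IsHermitian)
    (hΩA : spectrum ℝ A ⊆ Ω) (hΩB : spectrum ℝ B ⊆ Ω)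
    (p : ℝ) (hp0 : 0 < p) (hp1 : p ≤ 1) :
    ((((rdet (cfc f A)) ^ ((n : ℝ)⁻¹)) ^ p + ((rdet (cfc f B)) ^ ((n : ℝ)⁻¹)) ^ p) / 2) ^ (1 / p)
      ≤ (rdet (cfc f (betaP p A B))) ^ ((n : ℝ)⁻¹) := by
  have : Nonempty (Fin n) := ⟨⟨0, hn⟩⟩
  have hmean := stmt_4_general hf ⟨hA, hΩA⟩ ⟨hB, hΩB⟩ one_half_pos.le one_half_pos.le (add_halves 1)
    hp0 hp1
  rwa [← mul_add, one_div_mul_eq_div, ← betaP_eq_cfc_smul_add_smul, Fintype.card_fin] at hmean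
end
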